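/- The corrected BFO rule solves the parity problem: for every cyclic binary configuration x of odd length, there exists t_0 ≥ 0 such that for all t ≥ t_0, F^t(x) is the all-1s configuration if Par(x) = 1 and the all-0s configuration if Par(x) = 0. -/

import Mathlib

/-- The parity (XOR of all cells) of a cyclic binary configuration. -/
def Par {n : ℕ} [NeZero n] (x : ZMod n → Bool) : ZMod 2 :=
  ∑ i : ZMod n, if x i then 1 else 0

/-- The global CA rule induced by a local rule of radius `r`
on cyclic configurations of length `n`. -/
def globalRule (r : ℕ) (f : (Fin (2*r+1) → Bool) → Bool) {n : ℕ}
    (x : ZMod n → Bool) : ZMod n → Bool :=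
  fun i => f (fun j => x (i + ((j : ℕ) : ZMod n) - (r : ZMod n)))

/-- The active (center-flipping) neighbourhoods of the corrected BFO rule
(transitions T1–T12; the center is cell 4 of 9). -/
def bfoActive (w : Fin 9 → Bool) : Bool :=
  (w 1 && w 2 && w 3 && !w 4 && !w 5) ||               -- T1
  (w 0 && w 1 && w 2 && !w 3 && !w 4) ||               -- T2
  (!w 1 && !w 2 && w 3 && !w 4 && !w 5) ||             -- T3
  (!w 0 && !w 1 && w 2 && !w 3 && !w 4) ||             -- T4
  (!w 3 && w 4 && w 5 && !w 6) ||                      -- T5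
  (!w 2 && w 3 && w 4 && !w 5) ||                      -- T6
  (!w 1 && !w 2 && w 3 && !w 4 && w 5 && !w 6) ||      -- T7
  (!w 2 && !w 3 && w 4 && !w 5 && w 6 && !w 7) ||      -- T8
  (w 3 && w 4 && w 5 && !w 6 && w 7) ||                -- T9
  (w 0 && w 1 && w 2 && !w 3 && w 4 && !w 5) ||        -- T10
  (w 0 && w 1 && w 2 && !w 3 && w 4 && w 5 && w 6) ||  -- T11
  (w 2 && w 3 && w 4 && !w 5 && w 6 && w 7 && !w 8)    -- T12

/-- The corrected BFO local rule (radius 4). -/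
def bfoLocal (w : Fin 9 → Bool) : Bool := xor (bfoActive w) (w 4)

/-- The global rule induced by the corrected BFO rule. -/
def bfoGlobal {n : ℕ} (x : ZMod n → Bool) : ZMod n → Bool :=
  globalRule 4 bfoLocal x

/-- `x i x (i+1)` is a box: the pattern 01 preceded by 1 and followed by 00. -/
def IsBox {n : ℕ} (x : ZMod n → Bool) (i : ZMod n) : Prop :=
  x (i-1) = true ∧ x i = false ∧ x (i+1) = true ∧ x (i+2) = false ∧ x (i+3) = false

/-- Cell `j` belongs to some box of `x`. -/
def InBox {n : ℕ} (x : ZMod n → Bool) (j : ZMod n) : Prop :=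
  ∃ i, IsBox x i ∧ (j = i ∨ j = i + 1)

/-- `x` has a switch at position `i`: either a b-switch (a box at `i+1`)
or an r-switch (`x i ≠ x (i+1)` with neither cell in a box). -/
def IsSwitch {n : ℕ} (x : ZMod n → Bool) (i : ZMod n) : Prop :=
  IsBox x (i+1) ∨ (x i ≠ x (i+1) ∧ ¬ InBox x i ∧ ¬ InBox x (i+1))

/-- The number of switches of the configuration `x`. -/
noncomputable def switchCount {n : ℕ} (x : ZMod n → Bool) : ℕ :=
  Nat.card {i : ZMod n // IsSwitch x i}

/-- The block of length `2k+2` starting at position `i` is an ordered block. -/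
def IsOrderedBlock {n : ℕ} (x : ZMod n → Bool) (i : ZMod n) (k : ℕ) : Prop :=
  (∀ j ≤ k, ¬ (x (i + 2*j) = true ∧ x (i + 2*j + 1) = false)) ∧
  (x i = false ∧ x (i+1) = true) ∧
  ¬ (x (i + 2*k) = false ∧ x (i + 2*k + 1) = true) ∧
  (x (i + 2*k) = true ∧ x (i + 2*k + 1) = true → x (i + 2*k + 2) = false)

/-- An ordered block which is not a proper sub-block of another ordered block. -/
def IsMaximalOrderedBlock {n : ℕ} (x : ZMod n → Bool) (i : ZMod n) (k : ℕ) : Prop :=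
  IsOrderedBlock x i k ∧
  ∀ (i' : ZMod n) (k' d : ℕ), IsOrderedBlock x i' k' →
    i = i' + 2*d → 2*d + 2*k + 2 ≤ 2*k' + 2 → d = 0 ∧ k = k'

/-- `x` contains the word `w` starting at position `i`. -/
def ContainsAt {n : ℕ} (x : ZMod n → Bool) (i : ZMod n) (w : List Bool) : Prop :=
  ∀ j : Fin w.length, x (i + ((j : ℕ) : ZMod n)) = w.get j

/-- `x` belongs to `X_s`: the switch count is constant during the whole evolution
under the corrected BFO rule. -/
def InXs {n : ℕ} (x : ZMod n → Bool) : Prop :=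
  ∀ t : ℕ, switchCount (bfoGlobal^[t] x) = switchCount x

/-- Membership of the neighbourhood of cell `i` in one of the AT pairs
`T_{1,2}`, `T_{3,4}` (center at `i`). -/
def MatchT1234 {n : ℕ} (y : ZMod n → Bool) (i : ZMod n) : Prop :=
  (y (i-3) = true ∧ y (i-2) = true ∧ y (i-1) = true ∧ y i = false ∧ y (i+1) = false) ∨
  (y (i-4) = true ∧ y (i-3) = true ∧ y (i-2) = true ∧ y (i-1) = false ∧ y i = false) ∨
  (y (i-3) = false ∧ y (i-2) = false ∧ y (i-1) = true ∧ y i = false ∧ y (i+1) = false) ∨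
  (y (i-4) = false ∧ y (i-3) = false ∧ y (i-2) = true ∧ y (i-1) = false ∧ y i = false)

/-- The `k`-fold concatenation of a configuration of length `n`. -/
def concatK {n : ℕ} (k : ℕ) (x : ZMod n → Bool) : ZMod (k*n) → Bool :=
  fun i => x ((i.val : ZMod n))

/-!
Every left switch (a boundary `01` that is not a box) present after one step comes from a left
switch present before it, displaced by at most 3. So their number never increases, it is eventually
constant, and from then on no left switch is ever lost. This excludes many local patterns, and in
such an orbit a block `0ᵖ1ᵠ` whose length `p + q` is odd keeps its inner boundary while its two
ends move by even amounts, so the parities of `p` and `q` persist. If `p` is even, the run of zeros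
either shrinks until an excluded pattern appears or grows beyond the period; if `p` is odd, either
the run of ones does so or a block with `p` even and `q` odd appears. Hence there are no odd blocks.
But a non-homogeneous configuration of odd length is a cyclic sequence of such blocks, at least one
of them odd, so every orbit becomes homogeneous. Cells flip in pairs, so parity is preserved and
selects the limit.
-/

namespace BFO

/-- The BFO rule on bi-infinite configurations, where runs of equal cells have unambiguous ends. -/
def step (y : ℤ → Bool) (i : ℤ) : Bool :=
  bfoLocal fun j => y (i + (j : ℕ) - 4)

theorem step_apply (y : ℤ → Bool) (i : ℤ) :
    step y i = xor
      ((y (i - 3) && y (i - 2) && y (i - 1) && !y i && !y (i + 1)) ||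
      (y (i - 4) && y (i - 3) && y (i - 2) && !y (i - 1) && !y i) ||
      (!y (i - 3) && !y (i - 2) && y (i - 1) && !y i && !y (i + 1)) ||
      (!y (i - 4) && !y (i - 3) && y (i - 2) && !y (i - 1) && !y i) ||
      (!y (i - 1) && y i && y (i + 1) && !y (i + 2)) ||
      (!y (i - 2) && y (i - 1) && y i && !y (i + 1)) ||
      (!y (i - 3) && !y (i - 2) && y (i - 1) && !y i && y (i + 1) && !y (i + 2)) ||
      (!y (i - 2) && !y (i - 1) && y i && !y (i + 1) && y (i + 2) && !y (i + 3)) ||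
      (y (i - 1) && y i && y (i + 1) && !y (i + 2) && y (i + 3)) ||
      (y (i - 4) && y (i - 3) && y (i - 2) && !y (i - 1) && y i && !y (i + 1)) ||
      (y (i - 4) && y (i - 3) && y (i - 2) && !y (i - 1) && y i && y (i + 1) && y (i + 2)) ||
      (y (i - 2) && y (i - 1) && y i && !y (i + 1) && y (i + 2) && y (i + 3) && !y (i + 4)))
      (y i) := by
  simp [step, bfoLocal, bfoActive, add_sub_assoc, ← sub_eq_add_neg]

/-- The periodic bi-infinite configuration obtained by reading a cyclic one round and round. -/
def unroll {n : ℕ} (x : ZMod n → Bool) (i : ℤ) : Bool := x i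

theorem periodic_unroll {n : ℕ} (x : ZMod n → Bool) : Function.Periodic (unroll x) n :=
  fun i => by simp [unroll]

theorem semiconj_unroll (n : ℕ) : Function.Semiconj (unroll (n := n)) bfoGlobal step :=
  fun x => funext fun i => by simp [unroll, step, bfoGlobal, globalRule]

section Parity

theorem Par_xor {n : ℕ} [NeZero n] (x y : ZMod n → Bool) :
    Par (fun i => xor (x i) (y i)) = Par x + Par y := by
  have hbit : ∀ a b : Bool, (if xor a b then 1 else 0 : ZMod 2) =
      (if a then 1 else 0) + if b then 1 else 0 := by decide
  simp only [Par, hbit, Finset.sum_add_distrib]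

theorem Par_comp_sub_right {n : ℕ} [NeZero n] (x : ZMod n → Bool) (c : ZMod n) :
    Par (fun i => x (i - c)) = Par x :=
  (Equiv.subRight c).sum_comp fun i => if x i then 1 else 0

theorem Par_const {n : ℕ} [NeZero n] (hn : Odd n) (c : Bool) :
    Par (fun _ : ZMod n => c) = if c then 1 else 0 := by
  simp [Par, ZMod.card, (ZMod.natCast_eq_one_iff_odd (n := n)).2 hn]

variable {R : Type*} [AddGroupWithOne R]

/-- Cells `i` and `i + 1` flip together, by one of the pairs of transitions (T1, T2), (T3, T4),
(T5, T6), (T8, T7) and (T9, T12). -/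
def flipsNext (x : R → Bool) (i : R) : Bool :=
  (x (i - 3) && x (i - 2) && x (i - 1) && !x i && !x (i + 1)) ||
  (!x (i - 3) && !x (i - 2) && x (i - 1) && !x i && !x (i + 1)) ||
  (!x (i - 1) && x i && x (i + 1) && !x (i + 2)) ||
  (!x (i - 2) && !x (i - 1) && x i && !x (i + 1) && x (i + 2) && !x (i + 3)) ||
  (x (i - 1) && x i && x (i + 1) && !x (i + 2) && x (i + 3) && x (i + 4) && !x (i + 5))

/-- Cells `i` and `i + 3` flip together, by one of the pairs of transitions (T9, T10) and
(T9, T11). -/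
def flipsThird (x : R → Bool) (i : R) : Bool :=
  x (i - 1) && x i && x (i + 1) && !x (i + 2) && x (i + 3) && (!x (i + 4) || x (i + 5))

theorem step_eq_xor_flips (y : ℤ → Bool) (i : ℤ) :
    step y i = xor (xor (xor (flipsNext y i) (flipsNext y (i - 1)))
      (xor (flipsThird y i) (flipsThird y (i - 3)))) (y i) := by
  cases h0 : y (i - 1) <;> cases h1 : y i <;> cases h2 : y (i + 1) <;> cases h3 : y (i + 2) <;>
    grind [step_apply, flipsNext, flipsThird]

theorem bfoGlobal_eq_xor_flips {n : ℕ} (x : ZMod n → Bool) :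
    bfoGlobal x = fun i => xor (xor (xor (flipsNext x i) (flipsNext x (i - 1)))
      (xor (flipsThird x i) (flipsThird x (i - 3)))) (x i) := by
  funext i
  obtain ⟨i, rfl⟩ := ZMod.intCast_surjective i
  have h := step_eq_xor_flips (unroll x) i
  rw [← semiconj_unroll n x] at h
  simpa [unroll, flipsNext, flipsThird] using h

theorem Par_bfoGlobal {n : ℕ} [NeZero n] (x : ZMod n → Bool) : Par (bfoGlobal x) = Par x := by
  simp [bfoGlobal_eq_xor_flips, Par_xor, Par_comp_sub_right, CharTwo.add_cancel_left]

theorem Par_iterate_bfoGlobal {n : ℕ} [NeZero n] (x : ZMod n → Bool) (t : ℕ) :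
    Par (bfoGlobal^[t] x) = Par x :=
  congrFun (Function.iterate_invariant (g := Par) (funext Par_bfoGlobal) t) x

end Parity

section LeftSwitch

variable {R : Type*} [AddGroupWithOne R]

/-- A boundary `01` between the cells `q` and `q + 1` that is not a box. The definition serves both
cyclic (`R = ZMod n`) and bi-infinite (`R = ℤ`) configurations. -/
def IsLeftSwitch (x : R → Bool) (q : R) : Prop :=
  x q = false ∧ x (q + 1) = true ∧ ¬ (x (q - 1) = true ∧ x (q + 2) = false ∧ x (q + 3) = false)

instance (x : R → Bool) : DecidablePred (IsLeftSwitch x) :=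
  fun _ => inferInstanceAs (Decidable (_ ∧ _))

/-- How far one application of the BFO rule moves a left switch at `q`. Marking the switch itself
by `|`, it moves by 2 in the contexts `1110|10100` and `1110|11101`, by 1 in the remaining
contexts `1110|111` and in `00|1010`, by 3 in `0|110100`, and stays put otherwise. -/
def displacement (x : R → Bool) (q : R) : ℕ :=
  if x (q - 3) && x (q - 2) && x (q - 1) && !x q && x (q + 1) &&
      ((!x (q + 2) && x (q + 3) && !x (q + 4) && !x (q + 5)) ||
        (x (q + 2) && x (q + 3) && !x (q + 4) && x (q + 5))) then 2
  else if (x (q - 3) && x (q - 2) && x (q - 1) && !x q && x (q + 1) && x (q + 2) && x (q + 3)) ||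
      (!x (q - 1) && !x q && x (q + 1) && !x (q + 2) && x (q + 3) && !x (q + 4)) then 1
  else if !x q && x (q + 1) && x (q + 2) && !x (q + 3) && x (q + 4) && !x (q + 5) &&
      !x (q + 6) then 3
  else 0

end LeftSwitch

theorem isLeftSwitch_unroll {n : ℕ} (x : ZMod n → Bool) (q : ℤ) :
    IsLeftSwitch (unroll x) q ↔ IsLeftSwitch x (q : ZMod n) := by
  simp [IsLeftSwitch, unroll]

theorem displacement_unroll {n : ℕ} (x : ZMod n → Bool) (q : ℤ) :
    displacement (unroll x) q = displacement x (q : ZMod n) := by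
  simp [displacement, unroll]

theorem IsLeftSwitch.exists_of_step (y : ℤ → Bool) {p : ℤ} (hp : IsLeftSwitch (step y) p) :
    ∃ q, IsLeftSwitch y q ∧ q + displacement y q = p := by
  suffices (IsLeftSwitch y p ∧ displacement y p = 0) ∨
      (IsLeftSwitch y (p - 1) ∧ displacement y (p - 1) = 1) ∨
      (IsLeftSwitch y (p - 2) ∧ displacement y (p - 2) = 2) ∨
      (IsLeftSwitch y (p - 3) ∧ displacement y (p - 3) = 3) by
    rcases this with ⟨hq, hd⟩ | ⟨hq, hd⟩ | ⟨hq, hd⟩ | ⟨hq, hd⟩ <;>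
      exact ⟨_, hq, by omega⟩
  cases h0 : y (p - 1) <;> cases h1 : y p <;> cases h2 : y (p + 1) <;> cases h3 : y (p + 2) <;>
    grind [IsLeftSwitch, displacement, step_apply]

section Count

variable {n : ℕ} [NeZero n]

/-- The left switches of a cyclic configuration. -/
def leftSwitches (x : ZMod n → Bool) : Finset (ZMod n) :=
  {q | IsLeftSwitch x q}

theorem mem_leftSwitches {x : ZMod n → Bool} {q : ZMod n} :
    q ∈ leftSwitches x ↔ IsLeftSwitch x q :=
  Finset.mem_filter_univ q

theorem leftSwitches_bfoGlobal_subset (x : ZMod n → Bool) :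
    leftSwitches (bfoGlobal x) ⊆ (leftSwitches x).image fun q => q + displacement x q := by
  intro p hp
  obtain ⟨p, rfl⟩ := ZMod.intCast_surjective p
  simp only [mem_leftSwitches, Finset.mem_image] at hp ⊢
  rw [← isLeftSwitch_unroll, semiconj_unroll n x] at hp
  obtain ⟨q, hq, rfl⟩ := hp.exists_of_step
  exact ⟨q, (isLeftSwitch_unroll x q).1 hq, by simp [displacement_unroll]⟩

theorem card_leftSwitches_bfoGlobal_le (x : ZMod n → Bool) :
    (leftSwitches (bfoGlobal x)).card ≤ (leftSwitches x).card :=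
  (Finset.card_le_card (leftSwitches_bfoGlobal_subset x)).trans Finset.card_image_le

theorem IsLeftSwitch.map_bfoGlobal {x : ZMod n → Bool} {q : ZMod n} (hq : IsLeftSwitch x q)
    (hx : (leftSwitches (bfoGlobal x)).card = (leftSwitches x).card) :
    IsLeftSwitch (bfoGlobal x) (q + displacement x q) := by
  have himage : leftSwitches (bfoGlobal x) = _ :=
    Finset.eq_of_subset_of_card_le (leftSwitches_bfoGlobal_subset x)
      (Finset.card_image_le.trans hx.ge)
  rw [← mem_leftSwitches, himage]
  exact Finset.mem_image_of_mem _ (mem_leftSwitches.2 hq)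

theorem exists_card_leftSwitches_iterate_eq (x : ZMod n → Bool) :
    ∃ T, ∀ t, T ≤ t →
      (leftSwitches (bfoGlobal^[t + 1] x)).card = (leftSwitches (bfoGlobal^[t] x)).card := by
  have hanti : Antitone fun t => (leftSwitches (bfoGlobal^[t] x)).card :=
    antitone_nat_of_succ_le fun t => by
      rw [Function.iterate_succ_apply']
      exact card_leftSwitches_bfoGlobal_le _
  obtain ⟨T, hT⟩ := WellFoundedLT.antitone_chain_condition hanti
  exact ⟨T, fun t ht => (hT _ (by omega)).symm.trans (hT t ht)⟩

end Count

/-- A bi-infinite configuration none of whose left switches is ever lost under the BFO rule. -/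
def SwitchesSurvive (y : ℤ → Bool) : Prop :=
  ∀ t q, IsLeftSwitch (step^[t] y) q →
    IsLeftSwitch (step^[t + 1] y) (q + displacement (step^[t] y) q)

theorem exists_switchesSurvive_unroll_iterate {n : ℕ} [NeZero n] (x : ZMod n → Bool) :
    ∃ T, SwitchesSurvive (unroll (bfoGlobal^[T] x)) := by
  obtain ⟨T, hT⟩ := exists_card_leftSwitches_iterate_eq x
  refine ⟨T, fun t q hq => ?_⟩
  have hiterate (s : ℕ) : step^[s] (unroll (bfoGlobal^[T] x)) = unroll (bfoGlobal^[s + T] x) := by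
    rw [← (semiconj_unroll n).iterate_right, Function.iterate_add_apply]
  have hcard := hT (t + T) (by omega)
  rw [hiterate, isLeftSwitch_unroll] at hq
  rw [hiterate, hiterate, isLeftSwitch_unroll, displacement_unroll, add_right_comm t 1 T]
  rw [Function.iterate_succ_apply'] at hcard ⊢
  simpa using hq.map_bfoGlobal hcard

namespace SwitchesSurvive

variable {y : ℤ → Bool}

theorem map_step (h : SwitchesSurvive y) : SwitchesSurvive (step y) :=
  fun t q => h (t + 1) q

theorem isLeftSwitch_step (h : SwitchesSurvive y) {q : ℤ} {d : ℕ} (hq : IsLeftSwitch y q)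
    (hd : displacement y q = d) : IsLeftSwitch (step y) (q + d) :=
  hd ▸ h 0 q hq

theorem eq_100_of_0110 (h : SwitchesSurvive y) {q : ℤ} (h0 : y q = false) (h1 : y (q + 1) = true)
    (h2 : y (q + 2) = true) (h3 : y (q + 3) = false) :
    y (q + 4) = true ∧ y (q + 5) = false ∧ y (q + 6) = false := by
  by_contra hc
  have hswitch := h.isLeftSwitch_step (q := q) (d := 0) (by grind [IsLeftSwitch])
    (by grind [displacement])
  have h1' : step y (q + 1) = false := by grind [step_apply]
  grind [IsLeftSwitch]

theorem not_001010 (h : SwitchesSurvive y) {q : ℤ} (h0 : y q = false) (h1 : y (q + 1) = false)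
    (h2 : y (q + 2) = true) (h3 : y (q + 3) = false) (h4 : y (q + 4) = true)
    (h5 : y (q + 5) = false) : False := by
  have h2' : step y (q + 2) = false := by grind [step_apply]
  have h3' : step y (q + 3) = true := by grind [step_apply]
  have h4' : step y (q + 4) = true := by grind [step_apply]
  have h5' : step y (q + 5) = false := by grind [step_apply]
  by_cases h6 : y (q + 6) = true
  · have hswitch := h.isLeftSwitch_step (q := q + 3) (d := 0) (by grind [IsLeftSwitch])
      (by grind [displacement])
    grind [IsLeftSwitch]
  · have h6' : step y (q + 6) = false := by grind [step_apply]
    grind [h.map_step.eq_100_of_0110 (q := q + 2)]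

theorem eq_00_of_1110101 (h : SwitchesSurvive y) {q : ℤ} (h0 : y q = true) (h1 : y (q + 1) = true)
    (h2 : y (q + 2) = true) (h3 : y (q + 3) = false) (h4 : y (q + 4) = true)
    (h5 : y (q + 5) = false) (h6 : y (q + 6) = true) : y (q + 7) = false ∧ y (q + 8) = false := by
  by_contra hc
  have hswitch := h.isLeftSwitch_step (q := q + 3) (d := 0) (by grind [IsLeftSwitch])
    (by grind [displacement])
  have h4' : step y (q + 4) = false := by grind [step_apply]
  grind [IsLeftSwitch]

theorem eq_101_of_1001 (h : SwitchesSurvive y) {a : ℤ} (heq : y (a - 1) = y (a - 2))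
    (h0 : y a = true) (h1 : y (a + 1) = false) (h2 : y (a + 2) = false) (h3 : y (a + 3) = true) :
    y (a + 4) = true ∧ y (a + 5) = false ∧ y (a + 6) = true := by
  by_contra hc
  have hnot : ¬ (y (a + 4) = false ∧ y (a + 5) = true ∧ y (a + 6) = false) := by
    grind [h.not_001010 (q := a + 1)]
  have hswitch := h.isLeftSwitch_step (q := a + 2) (d := 0) (by grind [IsLeftSwitch])
    (by grind [displacement])
  have h2' : step y (a + 2) = true := by grind [step_apply]
  grind [IsLeftSwitch]

end SwitchesSurvive

/-- A configuration of odd period that has reached the regime in which no left switch is lost. -/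
structure IsStable (n : ℕ) (y : ℤ → Bool) : Prop where
  odd : Odd n
  periodic : Function.Periodic y n
  survive : SwitchesSurvive y

theorem step_periodic {y : ℤ → Bool} {c : ℤ} (hy : Function.Periodic y c) :
    Function.Periodic (step y) c := fun i => by
  simp only [step, add_right_comm i c, add_sub_right_comm _ c, hy _]

theorem IsStable.map_step {n : ℕ} {y : ℤ → Bool} (h : IsStable n y) : IsStable n (step y) :=
  ⟨h.odd, step_periodic h.periodic, h.survive.map_step⟩

theorem IsStable.eq_00_of_10101 {n : ℕ} {y : ℤ → Bool} (h : IsStable n y) {p : ℤ}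
    (h0 : y p = true) (h1 : y (p + 1) = false)
    (h2 : y (p + 2) = true) (h3 : y (p + 3) = false) (h4 : y (p + 4) = true) :
    y (p + 5) = false ∧ y (p + 6) = false := by
  by_contra hc
  have halternate (j : ℕ) : y (p - 2 * j) = true ∧ y (p - 2 * j + 1) = false ∧
      y (p - 2 * j + 2) = true ∧ y (p - 2 * j + 3) = false ∧ y (p - 2 * j + 4) = true ∧
      ¬ (y (p - 2 * j + 5) = false ∧ y (p - 2 * j + 6) = false) := by
    induction j with
    | zero => simp [*]
    | succ j ih =>
      rw [show p - 2 * ((j + 1 : ℕ) : ℤ) = (p - 2 * j) - 2 by push_cast; ring]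
      generalize p - 2 * (j : ℤ) = r at ih
      have not_00 : ¬ (y (r - 2) = false ∧ y (r - 1) = false) := by
        grind [h.survive.not_001010 (q := r - 2)]
      have not_01 : ¬ (y (r - 2) = false ∧ y (r - 1) = true) := by
        grind [h.survive.eq_100_of_0110 (q := r - 2)]
      have not_11 : ¬ (y (r - 2) = true ∧ y (r - 1) = true) := by
        grind [h.survive.eq_00_of_1110101 (q := r - 2)]
      grind
  obtain ⟨m, hm⟩ := h.odd
  have hzero := (halternate (m + 1)).2.1
  rw [← h.periodic, show p - 2 * ((m + 1 : ℕ) : ℤ) + 1 + n = p by rw [hm]; push_cast; ring, h0]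
    at hzero
  exact Bool.noConfusion hzero

/-- The cells of `(a, l]` are 0 and cell `a` is 1, so that the zeros cannot be prolonged to the
left. -/
structure ZeroRun (y : ℤ → Bool) (a l : ℤ) : Prop where
  lt : a < l
  one_left : y a = true
  eq_false : ∀ i, a < i → i ≤ l → y i = false

/-- The cells of `(l, b]` are 1 and cell `b + 1` is 0, so that the ones cannot be prolonged to the
right. -/
structure OneRun (y : ℤ → Bool) (l b : ℤ) : Prop where
  lt : l < b
  eq_true : ∀ i, l < i → i ≤ b → y i = true
  zero_right : y (b + 1) = false

namespace ZeroRun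

variable {y : ℤ → Bool} {a l : ℤ}

theorem sub_lt_period (hz : ZeroRun y a l) {n : ℕ} (hy : Function.Periodic y n) (hn : 0 < n) :
    l - a < n := by
  by_contra! hlt
  simpa [hy a, hz.one_left] using hz.eq_false (a + n) (by omega) (by omega)

theorem extend (hz : ZeroRun y a l) {m : ℤ} (hlm : l ≤ m)
    (hm : ∀ i, l < i → i ≤ m → y i = false) : ZeroRun y a m where
  lt := hz.lt.trans_le hlm
  one_left := hz.one_left
  eq_false i hai him := (le_or_gt i l).elim (hz.eq_false i hai) fun hli => hm i hli him

theorem step_eq_false (hz : ZeroRun y a l) {i : ℤ} (hai : a + 2 < i) (hil : i ≤ l) :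
    step y i = false := by
  have h0 := hz.eq_false i (by omega) hil
  have h1 := hz.eq_false (i - 1) (by omega) (by omega)
  have h2 := hz.eq_false (i - 2) (by omega) (by omega)
  grind [step_apply]

theorem step_of_eq (hz : ZeroRun y a l) (hal : a + 2 < l) (heq : y (a - 1) = y (a - 2)) :
    ZeroRun (step y) (a + 2) l ∧ step y (a + 1) = step y a := by
  have h0 := hz.one_left
  have h1 := hz.eq_false (a + 1) (by omega) (by omega)
  have h2 := hz.eq_false (a + 2) (by omega) (by omega)
  have h0' : step y a = true := by cases h3 : y (a - 1) <;> grind [step_apply]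
  have h1' : step y (a + 1) = true := by grind [step_apply]
  exact ⟨⟨hal, by grind [step_apply], fun i => hz.step_eq_false⟩, h1'.trans h0'.symm⟩

theorem step_of_101 (hz : ZeroRun y a l) (hal : a + 2 ≤ l) (h1 : y (a - 1) = false)
    (h2 : y (a - 2) = true) (ha : step y a = true) : ZeroRun (step y) a l where
  lt := hz.lt
  one_left := ha
  eq_false i hai hil := by
    obtain hi | rfl | rfl : a + 2 < i ∨ i = a + 1 ∨ i = a + 2 := by omega
    · exact hz.step_eq_false hi hil
    all_goals
      have h0 := hz.one_left
      have h1' := hz.eq_false (a + 1) (by omega) (by omega)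
      have h2' := hz.eq_false (a + 2) (by omega) (by omega)
      grind [step_apply]

theorem step_of_11101 (hz : ZeroRun y a l) (hal : a + 2 ≤ l) (h1 : y (a - 1) = false)
    (h2 : y (a - 2) = true) (h3 : y (a - 3) = true) (h4 : y (a - 4) = true) :
    ZeroRun (step y) (a - 2) l where
  lt := by omega
  one_left := by
    have h0 := hz.one_left
    have h1' := hz.eq_false (a + 1) (by omega) (by omega)
    grind [step_apply]
  eq_false i hai hil := by
    have h0 := hz.one_left
    have h1' := hz.eq_false (a + 1) (by omega) (by omega)
    have h2' := hz.eq_false (a + 2) (by omega) (by omega)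
    obtain hi | rfl | rfl | rfl | rfl :
      a + 2 < i ∨ i = a - 1 ∨ i = a ∨ i = a + 1 ∨ i = a + 2 := by omega
    · exact hz.step_eq_false hi hil
    all_goals grind [step_apply]

end ZeroRun

namespace OneRun

variable {y : ℤ → Bool} {l b : ℤ}

theorem sub_lt_period (ho : OneRun y l b) {n : ℕ} (hy : Function.Periodic y n) (hn : 0 < n) :
    b - l < n := by
  by_contra! hlt
  have h := ho.eq_true (b + 1 - n) (by omega) (by omega)
  rw [hy.sub_eq, ho.zero_right] at h
  exact Bool.noConfusion h

theorem step_eq_true (ho : OneRun y l b) {i : ℤ} (hli : l + 1 < i) (hib : i ≤ b - 2) :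
    step y i = true := by
  have h0 := ho.eq_true i (by omega) (by omega)
  have h1 := ho.eq_true (i - 1) (by omega) (by omega)
  have h2 := ho.eq_true (i + 1) (by omega) (by omega)
  have h3 := ho.eq_true (i + 2) (by omega) (by omega)
  grind [step_apply]

end OneRun

theorem IsStable.zeroRun_step_of_ne {n : ℕ} {y : ℤ → Bool} (h : IsStable n y) {a l : ℤ}
    (hz : ZeroRun y a l) (hal : a + 2 ≤ l) (hne : y (a - 1) ≠ y (a - 2)) :
    ZeroRun (step y) (a - 2) l ∨
      (ZeroRun (step y) a l ∧ step y (a - 1) = step y (a - 2)) := by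
  have h0 := hz.one_left
  have h1' := hz.eq_false (a + 1) (by omega) (by omega)
  have h2' := hz.eq_false (a + 2) (by omega) (by omega)
  have h2 : y (a - 2) = true := by
    by_contra
    grind [h.survive.eq_100_of_0110 (q := a - 2)]
  have h1 : y (a - 1) = false := by grind
  by_cases h34 : y (a - 3) = true ∧ y (a - 4) = true
  · exact .inl (hz.step_of_11101 hal h1 h2 h34.1 h34.2)
  right
  by_cases h3 : y (a - 3) = true
  · exact ⟨hz.step_of_101 hal h1 h2 (by grind [step_apply]), by grind [step_apply]⟩
  have h4 : y (a - 4) = true := by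
    by_contra
    grind [h.survive.not_001010 (q := a - 4)]
  have h56 : y (a - 5) = true ∧ y (a - 6) = true := by
    by_contra
    grind [h.survive.not_001010 (q := a - 6), h.survive.eq_100_of_0110 (q := a - 6),
      h.eq_00_of_10101 (p := a - 6)]
  exact ⟨hz.step_of_101 hal h1 h2 (by grind [step_apply]), by grind [step_apply]⟩

theorem IsStable.exists_zeroRun_step {n : ℕ} {y : ℤ → Bool} (h : IsStable n y) {a l : ℤ}
    (hz : ZeroRun y a l) (hal : a + 2 < l) : ∃ a', 2 ∣ a' - a ∧ ZeroRun (step y) a' l := by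
  by_cases heq : y (a - 1) = y (a - 2)
  · exact ⟨a + 2, by omega, (hz.step_of_eq hal heq).1⟩
  · obtain hz' | ⟨hz', -⟩ := h.zeroRun_step_of_ne hz hal.le heq
    · exact ⟨a - 2, by omega, hz'⟩
    · exact ⟨a, by omega, hz'⟩

namespace SwitchesSurvive

variable {y : ℤ → Bool}

theorem step_eq_false_of_100 (h : SwitchesSurvive y) {a : ℤ} (heq : y (a - 1) = y (a - 2))
    (h0 : y a = true) (h1 : y (a + 1) = false) (h2 : y (a + 2) = false) :
    step y (a + 3) = false := by
  cases h3 : y (a + 3)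
  · grind [step_apply]
  · obtain ⟨h4, h5, h6⟩ := h.eq_101_of_1001 heq h0 h1 h2 h3
    grind [step_apply]

theorem oneRun_step (h : SwitchesSurvive y) {l b : ℤ} (ho : OneRun y l b) (hlb : l + 3 ≤ b)
    (hl : step y (l + 1) = true) :
    (y (b + 2) = false ∧ OneRun (step y) l (b + 2)) ∨
      (y (b + 2) = true ∧ OneRun (step y) l (b - 2)) := by
  have h0 := ho.eq_true b (by omega) (by omega)
  have h1 := ho.eq_true (b - 1) (by omega) (by omega)
  have h2 := ho.eq_true (b - 2) (by omega) (by omega)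
  have h3 := ho.zero_right
  have hinner (i : ℤ) (hli : l < i) (hib : i ≤ b - 2) : step y i = true := by
    obtain rfl | hli' : i = l + 1 ∨ l + 1 < i := by omega
    · exact hl
    · exact ho.step_eq_true hli' hib
  cases h4 : y (b + 2)
  · refine .inl ⟨rfl, by omega, fun i hli hib => ?_, ?_⟩
    · obtain hi | rfl | rfl | rfl | rfl :
        i ≤ b - 2 ∨ i = b - 1 ∨ i = b ∨ i = b + 1 ∨ i = b + 2 := by omega
      · exact hinner i hli hi
      all_goals grind [step_apply]
    · grind [h.step_eq_false_of_100 (a := b)]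
  · exact .inr ⟨rfl, by omega, hinner, by grind [step_apply]⟩

theorem exists_oneRun_step (h : SwitchesSurvive y) {l b : ℤ} (h0 : y l = false)
    (h1 : y (l - 1) = false) (ho : OneRun y l b) (hodd : ¬ 2 ∣ b - l) :
    ∃ b', 2 ∣ b' - b ∧ OneRun (step y) l b' := by
  have hlb := ho.lt
  have h2 := ho.eq_true (l + 1) (by omega) (by omega)
  obtain rfl | hb : b = l + 1 ∨ l + 3 ≤ b := by omega
  · have h3 := ho.zero_right
    cases h4 : y (l + 3)
    · refine ⟨l + 3, by omega, by omega, fun i _ _ => ?_, ?_⟩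
      · obtain rfl | rfl | rfl : i = l + 1 ∨ i = l + 2 ∨ i = l + 3 := by omega
        all_goals grind [step_apply]
      · grind [h.step_eq_false_of_100 (a := l + 1)]
    · have h5 : y (l + 4) = true := by
        by_contra
        grind [h.not_001010 (q := l - 1)]
      refine ⟨l + 1, by omega, by omega, fun i _ _ => ?_, by grind [step_apply]⟩
      obtain rfl : i = l + 1 := by omega
      grind [step_apply]
  · have h3 := ho.eq_true (l + 2) (by omega) (by omega)
    have h4 := ho.eq_true (l + 3) (by omega) (by omega)
    obtain ⟨-, ho'⟩ | ⟨-, ho'⟩ := h.oneRun_step ho hb (by grind [step_apply])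
    · exact ⟨b + 2, by omega, ho'⟩
    · exact ⟨b - 2, by omega, ho'⟩

theorem not_evenZeroRun_oddOneRun_of_eq {y : ℤ → Bool} (h : SwitchesSurvive y) {a l b : ℤ}
    (hz : ZeroRun y a l) (ho : OneRun y l b) (heven : 2 ∣ l - a) (hodd : ¬ 2 ∣ b - l)
    (heq : y (a - 1) = y (a - 2)) : False := by
  have hal := hz.lt
  have hlb := ho.lt
  obtain ⟨b', hb', ho'⟩ := h.exists_oneRun_step (hz.eq_false l (by omega) le_rfl)
    (hz.eq_false (l - 1) (by omega) (by omega)) ho hodd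
  obtain rfl | hal' : l = a + 2 ∨ a + 2 < l := by omega
  · have h101 := h.eq_101_of_1001 heq hz.one_left (hz.eq_false _ (by omega) (by omega))
      (hz.eq_false _ (by omega) (by omega)) (by grind [ho.eq_true (a + 3) (by omega) (by omega)])
    obtain rfl | hb : b = a + 3 ∨ a + 5 ≤ b := by omega
    · grind [ho.zero_right]
    · grind [ho.eq_true (a + 5) (by omega) (by omega)]
  · obtain ⟨hz', heq'⟩ := hz.step_of_eq hal' heq
    exact h.map_step.not_evenZeroRun_oddOneRun_of_eq hz' ho' (by omega) (by omega) (by grind)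
termination_by (l - a).toNat

end SwitchesSurvive

namespace IsStable

variable {n : ℕ} {y : ℤ → Bool}

theorem not_evenZeroRun_oddOneRun {y : ℤ → Bool} (h : IsStable n y) {a l b : ℤ}
    (hz : ZeroRun y a l) (ho : OneRun y l b) (heven : 2 ∣ l - a) (hodd : ¬ 2 ∣ b - l) : False := by
  have hal := hz.lt
  by_cases heq : y (a - 1) = y (a - 2)
  · exact h.survive.not_evenZeroRun_oddOneRun_of_eq hz ho heven hodd heq
  obtain ⟨b', hb', ho'⟩ := h.survive.exists_oneRun_step (hz.eq_false l (by omega) le_rfl)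
    (hz.eq_false (l - 1) (by omega) (by omega)) ho hodd
  obtain hz' | ⟨hz', heq'⟩ := h.zeroRun_step_of_ne hz (by omega) heq
  · have := hz'.sub_lt_period h.map_step.periodic h.odd.pos
    exact h.map_step.not_evenZeroRun_oddOneRun hz' ho' (by omega) (by omega)
  · exact h.map_step.survive.not_evenZeroRun_oddOneRun_of_eq hz' ho' heven (by omega) heq'
termination_by (n - (l - a)).toNat

theorem eq_of_1011 (h : IsStable n y) {a : ℤ} (h0 : y a = true) (h1 : y (a + 1) = false)
    (h2 : y (a + 2) = true) (h3 : y (a + 3) = true) : y (a - 1) = y (a - 2) := by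
  have not_01 : ¬ (y (a - 2) = false ∧ y (a - 1) = true) := by
    grind [h.survive.eq_100_of_0110 (q := a - 2)]
  have not_10 : ¬ (y (a - 2) = true ∧ y (a - 1) = false) := by
    grind [h.eq_00_of_10101 (p := a - 2)]
  grind

end IsStable

theorem SwitchesSurvive.step_eq_true_of_1110110 {y : ℤ → Bool} (h : SwitchesSurvive y) {a : ℤ}
    (h2 : y (a - 2) = true) (h1 : y (a - 1) = true) (h0 : y a = true) (h1' : y (a + 1) = false)
    (h2' : y (a + 2) = true) (h3' : y (a + 3) = true) (h4' : y (a + 4) = false) :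
    step y (a - 2) = true := by
  by_contra hflip
  have hleft : y (a - 6) = true ∧ y (a - 5) = true ∧ y (a - 4) = true ∧ y (a - 3) = false := by
    grind [step_apply]
  have hswitch := h.isLeftSwitch_step (q := a - 3) (d := 2) (by grind [IsLeftSwitch])
    (by grind [displacement])
  have hstep : step y a = false := by grind [step_apply]
  grind [IsLeftSwitch]

theorem SwitchesSurvive.runs_step_of_1110110 {y : ℤ → Bool} (h : SwitchesSurvive y) {b : ℤ}
    (h2 : y (b - 2) = true) (h1 : y (b - 1) = true) (h0 : y b = true) (h1' : y (b + 1) = false)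
    (h2' : y (b + 2) = true) (h3' : y (b + 3) = true) (h4' : y (b + 4) = false) :
    ZeroRun (step y) (b - 2) (b + 4) ∧ OneRun (step y) (b + 4) (b + 5) := by
  obtain ⟨h5', h6', h7'⟩ := h.eq_100_of_0110 (q := b + 1) h1' (by grind) (by grind) (by grind)
  refine ⟨⟨by omega, h.step_eq_true_of_1110110 h2 h1 h0 h1' h2' h3' h4', fun i _ _ => ?_⟩,
    by omega, fun i _ _ => ?_, by grind [step_apply]⟩
  · obtain rfl | rfl | rfl | rfl | rfl | rfl : i = b - 1 ∨ i = b ∨ i = b + 1 ∨ i = b + 2 ∨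
      i = b + 3 ∨ i = b + 4 := by omega
    all_goals grind [step_apply]
  · obtain rfl : i = b + 5 := by omega
    grind [step_apply]

namespace IsStable

variable {n : ℕ} {y : ℤ → Bool}

theorem exists_zeroRun_step_of_0110 (h : IsStable n y) {a l : ℤ} (hz : ZeroRun y a l)
    (hodd : ¬ 2 ∣ l - a) (ho : OneRun y l (l + 2)) :
    ∃ a', 2 ∣ a' - a ∧ ZeroRun (step y) a' l := by
  have hal := hz.lt
  obtain rfl | hal' : l = a + 1 ∨ a + 2 < l := by omega
  swap
  · exact h.exists_zeroRun_step hz hal'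
  have h0 := hz.one_left
  have h1' := hz.eq_false (a + 1) (by omega) le_rfl
  have h2' : y (a + 2) = true := by grind [ho.eq_true (a + 2) (by omega) (by omega)]
  have h3' : y (a + 3) = true := by grind [ho.eq_true (a + 3) (by omega) (by omega)]
  have h4' : y (a + 4) = false := by grind [ho.zero_right]
  have heq := h.eq_of_1011 h0 h1' h2' h3'
  cases h1 : y (a - 1)
  · refine ⟨a, by omega, hal, by grind [step_apply], fun i _ _ => ?_⟩
    obtain rfl : i = a + 1 := by omega
    grind [step_apply]
  · have hleft := h.survive.step_eq_true_of_1110110 (by grind) h1 h0 h1' h2' h3' h4'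
    refine ⟨a - 2, by omega, by omega, hleft, fun i _ _ => ?_⟩
    obtain rfl | rfl | rfl : i = a - 1 ∨ i = a ∨ i = a + 1 := by omega
    all_goals grind [step_apply]

theorem not_oddZeroRun_oneRun_two (h : IsStable n y) {a l : ℤ} (hz : ZeroRun y a l)
    (hodd : ¬ 2 ∣ l - a) (ho : OneRun y l (l + 2)) : False := by
  obtain ⟨a', ha', hz'⟩ := h.exists_zeroRun_step_of_0110 hz hodd ho
  have h0 := hz.eq_false l hz.lt le_rfl
  have h1 := ho.eq_true (l + 1) (by omega) (by omega)
  have h2 := ho.eq_true (l + 2) (by omega) le_rfl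
  have h3 : y (l + 3) = false := by grind [ho.zero_right]
  obtain ⟨h4, h5, h6⟩ := h.survive.eq_100_of_0110 h0 h1 h2 h3
  have hz'' : ZeroRun (step y) a' (l + 3) := hz'.extend (by omega) fun i _ _ => by
    obtain rfl | rfl | rfl : i = l + 1 ∨ i = l + 2 ∨ i = l + 3 := by omega
    all_goals grind [step_apply]
  have ho' : OneRun (step y) (l + 3) (l + 4) := by
    refine ⟨by omega, fun i _ _ => ?_, by grind [step_apply]⟩
    obtain rfl : i = l + 4 := by omega
    grind [step_apply]
  exact h.map_step.not_evenZeroRun_oddOneRun hz'' ho' (by omega) (by omega)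

theorem eq_false_of_101111 (h : IsStable n y) {a b : ℤ} (hz : ZeroRun y a (a + 1))
    (ho : OneRun y (a + 1) b) (heven : 2 ∣ b - (a + 1)) (hab : a + 5 ≤ b) :
    y (a - 1) = false := by
  have h0 := hz.one_left
  have h1' := hz.eq_false (a + 1) (by omega) le_rfl
  have h2' := ho.eq_true (a + 2) (by omega) (by omega)
  have h3' := ho.eq_true (a + 3) (by omega) (by omega)
  have h4' := ho.eq_true (a + 4) (by omega) (by omega)
  have heq := h.eq_of_1011 h0 h1' h2' h3'
  by_contra h1
  have hz' : ZeroRun (step y) a (a + 2) := by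
    refine ⟨by omega, by grind [step_apply], fun i _ _ => ?_⟩
    obtain rfl | rfl : i = a + 1 ∨ i = a + 2 := by omega
    all_goals grind [step_apply]
  have ho₂ : OneRun y (a + 2) b :=
    ⟨by omega, fun i hai hib => ho.eq_true i (by omega) hib, ho.zero_right⟩
  obtain ⟨-, ho'⟩ | ⟨-, ho'⟩ := h.survive.oneRun_step ho₂ (by omega)
    (by grind [step_apply, ho.eq_true (a + 5) (by omega) (by omega)])
  all_goals exact h.map_step.not_evenZeroRun_oddOneRun hz' ho' (by omega) (by omega)

theorem exists_zeroRun_step_of_01111 (h : IsStable n y) {a l b : ℤ} (hz : ZeroRun y a l)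
    (ho : OneRun y l b) (hodd : ¬ 2 ∣ l - a) (heven : 2 ∣ b - l) (hlb : l + 4 ≤ b) :
    step y (l + 1) = true ∧ ∃ a', 2 ∣ a' - a ∧ ZeroRun (step y) a' l := by
  have hal := hz.lt
  have h0 := hz.eq_false l hal le_rfl
  have h1' := ho.eq_true (l + 1) (by omega) (by omega)
  have h2' := ho.eq_true (l + 2) (by omega) (by omega)
  have h3' := ho.eq_true (l + 3) (by omega) (by omega)
  obtain rfl | hal' : l = a + 1 ∨ a + 2 < l := by omega
  · have hone := hz.one_left
    have h1 := h.eq_false_of_101111 hz ho heven (by omega)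
    have h2 := h.eq_of_1011 hone h0 (by grind) (by grind)
    refine ⟨by grind [step_apply], a, by omega, hal, by grind [step_apply], fun i _ _ => ?_⟩
    obtain rfl : i = a + 1 := by omega
    grind [step_apply]
  · have h1 := hz.eq_false (l - 1) (by omega) (by omega)
    exact ⟨by grind [step_apply], h.exists_zeroRun_step hz hal'⟩

theorem exists_runs_step (h : IsStable n y) {a l b : ℤ} (hz : ZeroRun y a l)
    (ho : OneRun y l b) (hodd : ¬ 2 ∣ l - a) (heven : 2 ∣ b - l) :
    ∃ a', 2 ∣ a' - a ∧ ZeroRun (step y) a' l ∧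
      ((y (b + 2) = false ∧ OneRun (step y) l (b + 2)) ∨
        (y (b + 2) = true ∧ OneRun (step y) l (b - 2))) := by
  have hlb := ho.lt
  obtain rfl | hlb' : b = l + 2 ∨ l + 4 ≤ b := by omega
  · exact (h.not_oddZeroRun_oneRun_two hz hodd ho).elim
  · obtain ⟨hl, a', ha', hz'⟩ := h.exists_zeroRun_step_of_01111 hz ho hodd heven hlb'
    exact ⟨a', ha', hz', h.survive.oneRun_step ho (by omega) hl⟩

theorem not_oddZeroRun_evenOneRun_of_eq_true {y : ℤ → Bool} (h : IsStable n y) {a l b : ℤ}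
    (hz : ZeroRun y a l) (ho : OneRun y l b) (hodd : ¬ 2 ∣ l - a) (heven : 2 ∣ b - l)
    (hb : y (b + 2) = true) : False := by
  obtain ⟨a', ha', hz', ⟨hb', -⟩ | ⟨-, ho'⟩⟩ := h.exists_runs_step hz ho hodd heven
  · exact Bool.noConfusion (hb.symm.trans hb')
  have hlb' := ho'.lt
  have h0 := ho.eq_true b (by omega) le_rfl
  have h1 := ho.eq_true (b - 1) (by omega) (by omega)
  have h2 := ho.eq_true (b - 2) (by omega) (by omega)
  have h1' := ho.zero_right
  by_cases hstep : step y b = true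
  · exact h.map_step.not_oddZeroRun_evenOneRun_of_eq_true hz' ho' (by omega) (by omega)
      (by rwa [sub_add_cancel])
  · have h34 : y (b + 3) = true ∧ y (b + 4) = false := by grind [step_apply]
    obtain ⟨hz'', ho''⟩ := h.survive.runs_step_of_1110110 h2 h1 h0 h1' hb h34.1 h34.2
    exact h.map_step.not_evenZeroRun_oddOneRun hz'' ho'' (by omega) (by omega)
termination_by (b - l).toNat

theorem not_oddZeroRun_evenOneRun {y : ℤ → Bool} (h : IsStable n y) {a l b : ℤ}
    (hz : ZeroRun y a l) (ho : OneRun y l b) (hodd : ¬ 2 ∣ l - a) (heven : 2 ∣ b - l) :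
    False := by
  obtain ⟨a', ha', hz', ⟨-, ho'⟩ | ⟨hb, -⟩⟩ := h.exists_runs_step hz ho hodd heven
  · have := ho'.sub_lt_period h.map_step.periodic h.odd.pos
    exact h.map_step.not_oddZeroRun_evenOneRun hz' ho' (by omega) (by omega)
  · exact h.not_oddZeroRun_evenOneRun_of_eq_true hz ho hodd heven hb
termination_by (n - (b - l)).toNat

theorem even_sub_of_runs (h : IsStable n y) {a l b : ℤ} (hz : ZeroRun y a l)
    (ho : OneRun y l b) : Even (b - a) := by
  by_contra hodd
  rw [even_iff_two_dvd] at hodd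
  by_cases heven : 2 ∣ l - a
  · exact h.not_evenZeroRun_oddOneRun hz ho heven (by omega)
  · exact h.not_oddZeroRun_evenOneRun hz ho heven (by omega)

end IsStable

/-- Cell `p` is the last 1 of a run of ones: the boundaries at which the configuration is cut into
blocks of the form `0…01…1`. -/
def IsDescent (y : ℤ → Bool) (p : ℤ) : Prop :=
  y p = true ∧ y (p + 1) = false

theorem exists_isDescent {y : ℤ → Bool} {c : ℤ} (hy : Function.Periodic y c) (hc : 0 < c) {i j : ℤ}
    (hi : y i = true) (hj : y j = false) : ∃ p, IsDescent y p := by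
  by_contra! hdescent
  obtain ⟨k, ⟨hik, -⟩, hk⟩ := hy.exists_mem_Ico hc j i
  have htrue : ∀ m, i ≤ m → y m = true := by
    refine Int.leInduction hi fun m _ hm => ?_
    by_contra hm'
    exact hdescent m ⟨hm, by simpa using hm'⟩
  exact Bool.noConfusion (hj.symm.trans (hk.trans (htrue k hik)))

theorem exists_runs_of_isDescent {y : ℤ → Bool} {p q : ℤ} (hpq : p < q) (hp : IsDescent y p)
    (hq : IsDescent y q) (hbetween : ∀ i, p < i → i < q → ¬ IsDescent y i) :
    ∃ l, ZeroRun y p l ∧ OneRun y l q := by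
  obtain ⟨m, ⟨hpm, hm⟩, hleast⟩ :=
    Int.exists_least_of_bdd (P := fun i => p < i ∧ y i = true) ⟨p, fun _ hi => hi.1.le⟩
      ⟨q, hpq, hq.1⟩
  have hmq : m ≤ q := hleast q ⟨hpq, hq.1⟩
  have hm' : m ≠ p + 1 := by
    rintro rfl
    exact Bool.noConfusion (hm.symm.trans hp.2)
  have hones : ∀ i, m ≤ i → i ≤ q → y i = true := by
    refine Int.leInduction (fun _ => hm) fun i hmi ih hiq => ?_
    by_contra hi
    exact hbetween i (by omega) (by omega) ⟨ih (by omega), by simpa using hi⟩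
  refine ⟨m - 1, ⟨by omega, hp.1, fun i hpi him => ?_⟩,
    by omega, fun i hmi hiq => hones i (by omega) hiq, hq.2⟩
  by_contra hi
  have := hleast i ⟨hpi, by simpa using hi⟩
  omega

namespace IsStable

variable {n : ℕ} {y : ℤ → Bool}

theorem even_sub_of_isDescent (h : IsStable n y) {p q : ℤ} (hpq : p < q) (hp : IsDescent y p)
    (hq : IsDescent y q) : Even (q - p) := by
  by_cases hbetween : ∃ i, p < i ∧ i < q ∧ IsDescent y i
  · obtain ⟨i, hpi, hiq, hi⟩ := hbetween
    simpa using (h.even_sub_of_isDescent hiq hi hq).add (h.even_sub_of_isDescent hpi hp hi)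
  · push Not at hbetween
    obtain ⟨l, hz, ho⟩ := exists_runs_of_isDescent hpq hp hq hbetween
    exact h.even_sub_of_runs hz ho
termination_by (q - p).toNat

theorem not_isDescent (h : IsStable n y) (p : ℤ) : ¬ IsDescent y p := by
  intro hp
  have hp' : IsDescent y (p + n) := by
    simpa [IsDescent, add_right_comm p (n : ℤ) 1, h.periodic _] using hp
  have heven := h.even_sub_of_isDescent (by simpa using h.odd.pos) hp hp'
  rw [add_sub_cancel_left, Int.even_coe_nat] at heven
  exact Nat.not_even_iff_odd.2 h.odd heven

theorem exists_eq_const (h : IsStable n y) : ∃ c, y = fun _ => c := by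
  by_contra! hne
  obtain ⟨i, hi⟩ := Function.ne_iff.1 (hne false)
  obtain ⟨j, hj⟩ := Function.ne_iff.1 (hne true)
  obtain ⟨p, hp⟩ := exists_isDescent h.periodic (by exact_mod_cast h.odd.pos)
    (by simpa using hi) (by simpa using hj)
  exact h.not_isDescent p hp

end IsStable

theorem isFixedPt_bfoGlobal_const (n : ℕ) (c : Bool) :
    Function.IsFixedPt bfoGlobal (fun _ : ZMod n => c) := by
  funext i
  cases c <;> simp [bfoGlobal, globalRule, bfoLocal, bfoActive]

theorem exists_iterate_bfoGlobal_eq_const {n : ℕ} [NeZero n] (hn : Odd n) (x : ZMod n → Bool) :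
    ∃ T c, ∀ t, T ≤ t → bfoGlobal^[t] x = fun _ => c := by
  obtain ⟨T, hT⟩ := exists_switchesSurvive_unroll_iterate x
  obtain ⟨c, hc⟩ := IsStable.exists_eq_const ⟨hn, periodic_unroll _, hT⟩
  have hconst : bfoGlobal^[T] x = fun _ => c := by
    funext i
    obtain ⟨i, rfl⟩ := ZMod.intCast_surjective i
    exact congrFun hc i
  refine ⟨T, c, fun t ht => ?_⟩
  rw [← Nat.sub_add_cancel ht, Function.iterate_add_apply, hconst]
  exact (isFixedPt_bfoGlobal_const n c).iterate _

end BFO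

/-- The corrected BFO rule solves the parity problem. -/
theorem bfo_solves_parity (n : ℕ) [NeZero n] (hn : Odd n) (x : ZMod n → Bool) :
    ∃ t₀ : ℕ, ∀ t : ℕ, t₀ ≤ t →
      (Par x = 1 → bfoGlobal^[t] x = fun _ => true) ∧
      (Par x = 0 → bfoGlobal^[t] x = fun _ => false) := by
  obtain ⟨T, c, hT⟩ := BFO.exists_iterate_bfoGlobal_eq_const hn x
  have hPar : Par x = if c then 1 else 0 := by
    rw [← BFO.Par_iterate_bfoGlobal x T, hT T le_rfl, BFO.Par_const hn]
  refine ⟨T, fun t ht => ?_⟩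
  rw [hT t ht, hPar]
  cases c <;> simp
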